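/- Let F ⊆ E with c_p < r(F) < c_{p+1} for some p ∈ {1, …, m−1}. The rank induced forbidden set inequality (c_{p+1} − r(F))·x(F) − (r(F) − c_p)·x(E∖F) ≤ c_p·(c_{p+1} − r(F)) defines a facet of P^c(E) if and only if either (a) c_p = c_1 = 0 (so p = 1 and c_1 = 0) and the inequality x(F) ≤ r(F) defines a facet of P^{(c_{p+1})}(E), or (b) c_p > 0, F is closed, and (E∖F is c_{p+1}-inseparable or c_{p+1} < r(E)). -/

import Mathlib

open Finset

/-- A (loopless) matroid on a finite ground set, given by its independent sets. -/
structure FinMatroid (α : Type*) [Fintype α] [DecidableEq α] where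
  Indep : Finset α → Prop
  empty_indep : Indep ∅
  subset_indep : ∀ ⦃I J : Finset α⦄, Indep J → I ⊆ J → Indep I
  exchange : ∀ ⦃I J : Finset α⦄, Indep I → Indep J → I.card < J.card →
    ∃ e ∈ J \ I, Indep (insert e I)
  loopless : ∀ e : α, Indep {e}

variable {α : Type*} [Fintype α] [DecidableEq α]

open Classical in
/-- The rank of a set: the maximum cardinality of an independent subset. -/
noncomputable def FinMatroid.r (M : FinMatroid α) (F : Finset α) : ℕ :=
  (F.powerset.filter M.Indep).sup Finset.card

/-- incidence vector -/
noncomputable def incVec (I : Finset α) : α → ℝ := fun e => if e ∈ I then 1 else 0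

/-- x(S) = ∑_{e ∈ S} x_e -/
noncomputable def fsum (x : α → ℝ) (S : Finset α) : ℝ := ∑ e ∈ S, x e

/-- closed set -/
def FinMatroid.ClosedSet (M : FinMatroid α) (F : Finset α) : Prop :=
  ∀ e ∉ F, M.r F < M.r (insert e F)

/-- F is separable -/
def FinMatroid.Separable (M : FinMatroid α) (F : Finset α) : Prop :=
  ∃ F₁ F₂ : Finset α, F₁ ≠ ∅ ∧ F₂ ≠ ∅ ∧ Disjoint F₁ F₂ ∧ F₁ ∪ F₂ = F ∧
    M.r F₁ + M.r F₂ ≤ M.r F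

def FinMatroid.Inseparable (M : FinMatroid α) (F : Finset α) : Prop :=
  ¬ M.Separable F

/-- the k-rank r^k(F) = k - r(E \ F), as an integer -/
noncomputable def FinMatroid.krank (M : FinMatroid α) (k : ℕ) (F : Finset α) : ℤ :=
  (k : ℤ) - (M.r Fᶜ : ℤ)

/-- F is k-separable -/
noncomputable def FinMatroid.kSeparable (M : FinMatroid α) (k : ℕ) (F : Finset α) : Prop :=
  ∃ F₁ F₂ : Finset α, F₁ ≠ ∅ ∧ F₂ ≠ ∅ ∧ Disjoint F₁ F₂ ∧ F₁ ∪ F₂ = F ∧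
    M.krank k F₁ + M.krank k F₂ = M.krank k F

noncomputable def FinMatroid.kInseparable (M : FinMatroid α) (k : ℕ) (F : Finset α) : Prop :=
  ¬ M.kSeparable k F

/-- convex hull of incidence vectors of independent sets of cardinality exactly k -/
noncomputable def exactPolytope (M : FinMatroid α) (k : ℕ) : Set (α → ℝ) :=
  convexHull ℝ {x | ∃ I : Finset α, M.Indep I ∧ I.card = k ∧ x = incVec I}

/-- the cardinality constrained matroid polytope P^c(E) -/
noncomputable def cardPolytope (M : FinMatroid α) {m : ℕ} (c : Fin m → ℕ) : Set (α → ℝ) :=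
  convexHull ℝ {x | ∃ I : Finset α, M.Indep I ∧ (∃ p : Fin m, I.card = c p) ∧ x = incVec I}

/-- dimension of (the affine hull of) a subset of ℝ^E -/
noncomputable def polyDim (s : Set (α → ℝ)) : ℕ :=
  Module.finrank ℝ (affineSpan ℝ s).direction

/-- `a · x ≤ a₀` defines a facet of `P` -/
noncomputable def IsFacet (P : Set (α → ℝ)) (a : α → ℝ) (a₀ : ℝ) : Prop :=
  (∀ x ∈ P, ∑ e, a e * x e ≤ a₀) ∧
  polyDim {x ∈ P | ∑ e, a e * x e = a₀} + 1 = polyDim P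

/-! A face of the polytope is a facet iff every weight with constant sum on its vertices is a linear
combination of those describing the face and the affine hull of the polytope. The vertices on the
face of the forbidden set inequality for `c_p = l < r(F) < k = c_{p+1}` are the independent
`l`-subsets of `F` together with the tight sets: the independent `k`-sets that contain a basis of
`F`.

For `l > 0` the polytope is full-dimensional, and exchanges between independent `l`-subsets of `F`
make a weight constant on `F`. After subtracting a multiple of the inequality, it remains to decide
whether a nonzero weight vanishing on `F` can have sum zero on all tight sets, that is, on all bases
of the truncation to rank `k - r(F)` of `M / F`. If `F` is not closed, some `e ∉ F` lies in no tight
set and its indicator is such a weight; if `A ∪ B = E ∖ F` is a `k`-separation, every tight set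
meets `A` and `B` in a fixed number of elements, and a combination of the indicators of `A` and `B`
does it. Otherwise exchanges between tight sets force the weight to be constant off `F`, hence zero.

For `l = 0` the only independent `l`-set is `∅`, so that both the face and the polytope gain exactly
one dimension over their parts in the hyperplane `x(E) = k`. -/

section ConvexHull

variable {𝕜 V : Type*} [Field 𝕜] [LinearOrder 𝕜] [IsStrictOrderedRing 𝕜] [AddCommGroup V]
  [Module 𝕜 V] {s : Set V} {f : V →ₗ[𝕜] 𝕜} {c : 𝕜}

theorem forall_mem_convexHull_le_iff :
    (∀ x ∈ convexHull 𝕜 s, f x ≤ c) ↔ ∀ x ∈ s, f x ≤ c :=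
  (convex_halfSpace_le f.isLinear c).convexHull_subset_iff

theorem sep_convexHull_eq_convexHull_sep (h : ∀ x ∈ s, f x ≤ c) :
    {x ∈ convexHull 𝕜 s | f x = c} = convexHull 𝕜 {x ∈ s | f x = c} := by
  set t := {x ∈ s | f x = c}
  refine Set.Subset.antisymm (fun x ⟨hx, hxc⟩ => ?_) (convexHull_min (fun x hx =>
    ⟨subset_convexHull 𝕜 s hx.1, hx.2⟩) ((convex_convexHull 𝕜 s).inter
      (convex_hyperplane f.isLinear c)))
  -- A proper convex combination involving a point where `f < c` again satisfies `f < c`.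
  have hconv : Convex 𝕜 {x | f x < c ∨ f x = c ∧ x ∈ convexHull 𝕜 t} := by
    refine convex_iff_forall_pos.2 fun x hx y hy a b ha hb hab => ?_
    have hval : f (a • x + b • y) - c = a * (f x - c) + b * (f y - c) := by
      simp only [map_add, map_smul, smul_eq_mul]
      linear_combination c * hab
    rcases hx with hx | ⟨hx, hxt⟩ <;> rcases hy with hy | ⟨hy, hyt⟩
    · exact Or.inl (sub_neg.1 (hval ▸ add_neg (mul_neg_of_pos_of_neg ha (sub_neg.2 hx))
        (mul_neg_of_pos_of_neg hb (sub_neg.2 hy))))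
    · left
      rw [← sub_neg, hval, hy, sub_self, mul_zero, add_zero]
      exact mul_neg_of_pos_of_neg ha (sub_neg.2 hx)
    · left
      rw [← sub_neg, hval, hx, sub_self, mul_zero, zero_add]
      exact mul_neg_of_pos_of_neg hb (sub_neg.2 hy)
    · refine Or.inr ⟨sub_eq_zero.1 ?_, convex_convexHull 𝕜 t hxt hyt ha.le hb.le hab⟩
      rw [hval, hx, hy, sub_self, mul_zero, mul_zero, add_zero]
  have hsub : s ⊆ {x | f x < c ∨ f x = c ∧ x ∈ convexHull 𝕜 t} := fun x hx =>
    (h x hx).lt_or_eq.imp_right fun hxc => ⟨hxc, subset_convexHull 𝕜 t ⟨hx, hxc⟩⟩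
  exact ((convexHull_min hsub hconv hx).resolve_left hxc.not_lt).2

end ConvexHull

section VectorSpan

variable {K V : Type*} [Field K] [AddCommGroup V] [Module K V] {s : Set V}

theorem mem_dualAnnihilator_vectorSpan_iff (hs : s.Nonempty) {f : Module.Dual K V} :
    f ∈ (vectorSpan K s).dualAnnihilator ↔ ∃ d, ∀ x ∈ s, f x = d := by
  obtain ⟨y, hy⟩ := hs
  rw [vectorSpan_def, ← SetLike.mem_coe, Submodule.coe_dualAnnihilator_span]
  constructor
  · intro h
    refine ⟨f y, fun x hx => sub_eq_zero.1 ?_⟩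
    rw [← map_sub]
    exact h (Set.vsub_mem_vsub hx hy)
  · rintro ⟨d, hd⟩ _ ⟨x, hx, z, hz, rfl⟩
    simp [hd x hx, hd z hz]

variable [FiniteDimensional K V]

theorem finrank_vectorSpan_insert_zero (hs : s.Nonempty) {f : Module.Dual K V} {c : K}
    (hc : c ≠ 0) (hf : ∀ x ∈ s, f x = c) :
    Module.finrank K (vectorSpan K (insert 0 s)) = Module.finrank K (vectorSpan K s) + 1 := by
  have hann := (mem_dualAnnihilator_vectorSpan_iff hs).2 ⟨c, hf⟩
  obtain ⟨y, hy⟩ := hs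
  have hnot : (0 : V) -ᵥ y ∉ vectorSpan K s := fun h => hc <| by
    simpa [hf y hy] using (Submodule.mem_dualAnnihilator f).1 hann _ h
  rw [← direction_affineSpan, ← affineSpan_insert_affineSpan,
    AffineSubspace.direction_affineSpan_insert (mem_affineSpan K hy), sup_comm,
    direction_affineSpan, Submodule.finrank_sup_span_singleton hnot]

theorem finrank_vectorSpan_eq_finrank (hs : s.Nonempty)
    (h : ∀ (f : Module.Dual K V) (d : K), (∀ x ∈ s, f x = d) → f = 0) :
    Module.finrank K (vectorSpan K s) = Module.finrank K V := by
  have hbot : (vectorSpan K s).dualAnnihilator = ⊥ := (Submodule.eq_bot_iff _).2 fun f hf => by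
    obtain ⟨d, hd⟩ := (mem_dualAnnihilator_vectorSpan_iff hs).1 hf
    exact h f d hd
  rw [← Subspace.finrank_add_finrank_dualAnnihilator_eq (vectorSpan K s), hbot, finrank_bot,
    add_zero]

theorem finrank_vectorSpan_add_one_eq_finrank_iff (hs : s.Nonempty) {f : Module.Dual K V} {c : K}
    (hf : f ≠ 0) (hfs : ∀ x ∈ s, f x = c) :
    Module.finrank K (vectorSpan K s) + 1 = Module.finrank K V ↔
      ∀ (g : Module.Dual K V) (d : K), (∀ x ∈ s, g x = d) → ∃ t : K, t • f = g := by
  have hann := (mem_dualAnnihilator_vectorSpan_iff hs).2 ⟨c, hfs⟩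
  rw [← Subspace.finrank_add_finrank_dualAnnihilator_eq (vectorSpan K s),
    Nat.add_left_cancel_iff, eq_comm,
    finrank_eq_one_iff_of_nonzero' (⟨f, hann⟩ : (vectorSpan K s).dualAnnihilator)
      (by simpa using hf)]
  simp only [Subtype.forall, mem_dualAnnihilator_vectorSpan_iff hs, forall_exists_index,
    SetLike.mk_smul_mk, Subtype.mk.injEq]

end VectorSpan

section IncidenceVectors

variable {ι : Type*}

theorem polyDim_eq_finrank_vectorSpan (s : Set (ι → ℝ)) :
    polyDim s = Module.finrank ℝ (vectorSpan ℝ s) := by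
  rw [polyDim, direction_affineSpan]

theorem polyDim_convexHull (s : Set (ι → ℝ)) : polyDim (convexHull ℝ s) = polyDim s := by
  rw [polyDim, affineSpan_convexHull, polyDim]

theorem incVec_empty [DecidableEq ι] : incVec (∅ : Finset ι) = 0 := by
  ext
  simp [incVec]

theorem sum_incVec [DecidableEq ι] (T F : Finset ι) : ∑ e ∈ T, incVec F e = (T ∩ F).card := by
  simp [incVec]

theorem dotProductEquiv_incVec (b : α → ℝ) (I : Finset α) :
    dotProductEquiv ℝ α b (incVec I) = ∑ e ∈ I, b e := by
  simp [incVec, dotProduct]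

variable {𝓕 : Set (Finset α)} {a : α → ℝ} {a₀ : ℝ}

theorem isFacet_convexHull_incVec_iff (h : ∀ I ∈ 𝓕, ∑ e ∈ I, a e ≤ a₀) :
    IsFacet (convexHull ℝ (incVec '' 𝓕)) a a₀ ↔
      polyDim (incVec '' {I ∈ 𝓕 | ∑ e ∈ I, a e = a₀}) + 1 = polyDim (incVec '' 𝓕) := by
  have hle : ∀ x ∈ incVec '' 𝓕, dotProductEquiv ℝ α a x ≤ a₀ := by
    simpa only [Set.forall_mem_image, dotProductEquiv_incVec] using h
  have hsep : {x ∈ incVec '' 𝓕 | dotProductEquiv ℝ α a x = a₀} =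
      incVec '' {I ∈ 𝓕 | ∑ e ∈ I, a e = a₀} := by
    simp only [← dotProductEquiv_incVec]
    exact (Set.image_inter_preimage incVec 𝓕 {x | dotProductEquiv ℝ α a x = a₀}).symm
  change (∀ x ∈ _, dotProductEquiv ℝ α a x ≤ a₀) ∧
    polyDim {x ∈ _ | dotProductEquiv ℝ α a x = a₀} + 1 = _ ↔ _
  rw [and_iff_right (forall_mem_convexHull_le_iff.2 hle), sep_convexHull_eq_convexHull_sep hle,
    hsep, polyDim_convexHull, polyDim_convexHull]

theorem polyDim_incVec_image_eq_card (h𝓕 : 𝓕.Nonempty)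
    (h : ∀ (b : α → ℝ) (d : ℝ), (∀ I ∈ 𝓕, ∑ e ∈ I, b e = d) → b = 0) :
    polyDim (incVec '' 𝓕) = Fintype.card α := by
  rw [polyDim_eq_finrank_vectorSpan, ← Module.finrank_fintype_fun_eq_card ℝ (η := α)]
  refine finrank_vectorSpan_eq_finrank (h𝓕.image incVec) fun f d hf => ?_
  obtain ⟨b, rfl⟩ := (dotProductEquiv ℝ α).surjective f
  rw [h b d (by simpa only [Set.forall_mem_image, dotProductEquiv_incVec] using hf), map_zero]

theorem polyDim_incVec_image_add_one_eq_card_iff (h𝓕 : 𝓕.Nonempty) (ha : a ≠ 0)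
    (ha𝓕 : ∀ I ∈ 𝓕, ∑ e ∈ I, a e = a₀) :
    polyDim (incVec '' 𝓕) + 1 = Fintype.card α ↔
      ∀ (b : α → ℝ) (d : ℝ), (∀ I ∈ 𝓕, ∑ e ∈ I, b e = d) → ∃ t : ℝ, t • a = b := by
  rw [polyDim_eq_finrank_vectorSpan, ← Module.finrank_fintype_fun_eq_card ℝ (η := α),
    finrank_vectorSpan_add_one_eq_finrank_iff (h𝓕.image incVec) (f := dotProductEquiv ℝ α a)
      (c := a₀) (by simpa using ha)
      (by simpa only [Set.forall_mem_image, dotProductEquiv_incVec] using ha𝓕),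
    (dotProductEquiv ℝ α).surjective.forall]
  simp only [Set.forall_mem_image, dotProductEquiv_incVec, ← map_smul,
    EmbeddingLike.apply_eq_iff_eq]

theorem polyDim_incVec_image_insert_empty [Finite ι] [DecidableEq ι] {𝓖 : Set (Finset ι)} {k : ℕ}
    (h𝓖 : 𝓖.Nonempty) (hk : k ≠ 0) (hcard : ∀ I ∈ 𝓖, I.card = k) :
    polyDim (incVec '' insert ∅ 𝓖) = polyDim (incVec '' 𝓖) + 1 := by
  obtain ⟨_⟩ := nonempty_fintype ι
  have hone : ∀ x ∈ incVec '' 𝓖, dotProductEquiv ℝ ι 1 x = k := by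
    rw [Set.forall_mem_image]
    intro I hI
    rw [dotProductEquiv_incVec]
    simp [hcard I hI]
  rw [Set.image_insert_eq, incVec_empty, polyDim_eq_finrank_vectorSpan,
    polyDim_eq_finrank_vectorSpan,
    finrank_vectorSpan_insert_zero (h𝓖.image incVec) (Nat.cast_ne_zero.2 hk) hone]

theorem weight_eq_of_sum_exchange_eq [DecidableEq ι] {R : Type*} [AddCommGroup R] {b : ι → R}
    {T : Finset ι} {a g : ι} (ha : a ∈ T) (hg : g ∉ T)
    (h : ∑ e ∈ insert g (T.erase a), b e = ∑ e ∈ T, b e) : b g = b a := by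
  rw [sum_insert (fun hgT => hg (mem_of_mem_erase hgT)), ← add_sum_erase T b ha] at h
  exact add_right_cancel h

end IncidenceVectors

section Complement

variable {F A B : Finset α}

theorem card_inter_union_add_card_inter_union (hd : Disjoint A B)
    (hAB : A ∪ B = Fᶜ) (T : Finset α) :
    (T ∩ (F ∪ A)).card + (T ∩ (F ∪ B)).card = T.card + (T ∩ F).card := by
  rw [← card_union_add_card_inter, ← inter_union_distrib_left, ← inter_inter_distrib_left,
    ← union_union_distrib_left, ← union_inter_distrib_left, hAB, union_compl, inter_univ,
    disjoint_iff_inter_eq_empty.1 hd, union_empty]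

theorem compl_eq_union_of_union_eq_compl (hd : Disjoint A B) (hAB : A ∪ B = Fᶜ) :
    Aᶜ = F ∪ B := by
  rw [← compl_compl F, ← hAB, compl_union, union_comm, union_inter_distrib_left, union_compl,
    inter_univ, union_eq_right.2 (subset_compl_comm.1 (subset_compl_iff_disjoint_right.2 hd))]

end Complement

namespace FinMatroid

variable {M : FinMatroid α} {F G H I J T X : Finset α} {e g : α} {k : ℕ}

theorem Indep.card_le_r (hI : M.Indep I) (hIF : I ⊆ F) : I.card ≤ M.r F := by
  classical
  exact Finset.le_sup (f := Finset.card) (by simp [hI, hIF])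

theorem Indep.card_inter_le_r (hI : M.Indep I) (F : Finset α) : (I ∩ F).card ≤ M.r F :=
  (M.subset_indep hI inter_subset_left).card_le_r inter_subset_right

/-- `X` is a basis of `F`: an independent subset of `F` of maximum cardinality. -/
structure IsBasis (M : FinMatroid α) (X F : Finset α) : Prop where
  indep : M.Indep X
  subset : X ⊆ F
  card_eq : X.card = M.r F

theorem exists_isBasis (M : FinMatroid α) (F : Finset α) : ∃ X, M.IsBasis X F := by
  classical
  obtain ⟨X, hX, hcard⟩ := Finset.exists_mem_eq_sup (F.powerset.filter M.Indep)
    ⟨∅, by simp [M.empty_indep]⟩ Finset.card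
  simp only [mem_filter, mem_powerset] at hX
  exact ⟨X, hX.2, hX.1, hcard.symm⟩

theorem r_mono (M : FinMatroid α) (h : F ⊆ G) : M.r F ≤ M.r G := by
  obtain ⟨X, hX⟩ := M.exists_isBasis F
  exact hX.card_eq ▸ hX.indep.card_le_r (hX.subset.trans h)

theorem r_empty (M : FinMatroid α) : M.r ∅ = 0 := by
  obtain ⟨X, hX⟩ := M.exists_isBasis ∅
  rw [← hX.card_eq, subset_empty.1 hX.subset, card_empty]

theorem r_singleton_pos (M : FinMatroid α) (e : α) : 0 < M.r {e} :=
  (M.loopless e).card_le_r Subset.rfl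

theorem nonempty_of_r_pos (h : 0 < M.r F) : F.Nonempty := by
  rw [nonempty_iff_ne_empty]
  rintro rfl
  exact h.ne' M.r_empty

theorem Indep.exists_superset_subset_union_card_eq (hI : M.Indep I) (hJ : M.Indep J)
    (hIk : I.card ≤ k) (hkJ : k ≤ J.card) :
    ∃ K, I ⊆ K ∧ K ⊆ I ∪ J ∧ M.Indep K ∧ K.card = k := by
  induction k, hIk using Nat.le_induction with
  | base => exact ⟨I, Subset.rfl, subset_union_left, hI, rfl⟩
  | succ n _ ih =>
    obtain ⟨K, hIK, hKU, hK, hcard⟩ := ih (by lia)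
    obtain ⟨e, he, hKe⟩ := M.exchange hK hJ (by lia)
    rw [mem_sdiff] at he
    refine ⟨insert e K, hIK.trans (subset_insert _ _),
      insert_subset (mem_union_right _ he.1) hKU, hKe, ?_⟩
    rw [card_insert_of_notMem he.2, hcard]

theorem Indep.exists_superset_card_eq (hI : M.Indep I) (hIG : I ⊆ G) (hIk : I.card ≤ k)
    (hk : k ≤ M.r G) : ∃ K, I ⊆ K ∧ K ⊆ G ∧ M.Indep K ∧ K.card = k := by
  obtain ⟨J, hJ⟩ := M.exists_isBasis G
  obtain ⟨K, hIK, hKU, hK, hcard⟩ :=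
    hI.exists_superset_subset_union_card_eq hJ.indep hIk (hJ.card_eq ▸ hk)
  exact ⟨K, hIK, hKU.trans (union_subset hIG hJ.subset), hK, hcard⟩

theorem exists_indep_subset_card_eq (hk : k ≤ M.r G) : ∃ I ⊆ G, M.Indep I ∧ I.card = k := by
  obtain ⟨I, -, hI⟩ := M.empty_indep.exists_superset_card_eq (empty_subset G) (Nat.zero_le k) hk
  exact ⟨I, hI⟩

theorem Indep.exists_indep_insert_erase (hT : M.Indep T) (hJT : J ⊆ T) (hcard : J.card < T.card)
    (hg : g ∉ T) (hJg : M.Indep (insert g J)) :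
    ∃ a ∈ T \ J, M.Indep (insert g (T.erase a)) := by
  have hgJ : g ∉ J := fun h => hg (hJT h)
  obtain ⟨K, hJK, hKU, hK, hKT⟩ := hJg.exists_superset_subset_union_card_eq hT
    (by rw [card_insert_of_notMem hgJ]; exact hcard) le_rfl
  have hKT' : K ⊆ insert g T := hKU.trans (by grind)
  obtain ⟨a, ha⟩ : ∃ a, insert g T \ K = {a} := by
    rw [← card_eq_one, card_sdiff_of_subset hKT', card_insert_of_notMem hg, hKT,
      Nat.add_sub_cancel_left]
  have haK : a ∈ insert g T ∧ a ∉ K := mem_sdiff.1 (ha ▸ mem_singleton_self a)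
  have hKa : K = insert g (T.erase a) := by
    rw [← Finset.sdiff_sdiff_eq_self hKT', ha]
    grind
  exact ⟨a, by grind, hKa ▸ hK⟩

theorem IsBasis.indep_insert (hX : M.IsBasis X F) (h : M.r F < M.r (insert e F)) :
    M.Indep (insert e X) := by
  obtain ⟨J, hJ⟩ := M.exists_isBasis (insert e F)
  obtain ⟨g, hg, hXg⟩ := M.exchange hX.indep hJ.indep (by rwa [hX.card_eq, hJ.card_eq])
  rw [mem_sdiff] at hg
  rcases mem_insert.1 (hJ.subset hg.1) with rfl | hgF
  · exact hXg
  · have hcard := hXg.card_le_r (insert_subset hgF hX.subset)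
    rw [card_insert_of_notMem hg.2, hX.card_eq] at hcard
    lia

theorem IsBasis.r_lt_r_insert (hX : M.IsBasis X F) (heX : e ∉ X) (h : M.Indep (insert e X)) :
    M.r F < M.r (insert e F) := by
  have hcard := h.card_le_r (insert_subset_insert e hX.subset)
  rwa [card_insert_of_notMem heX, hX.card_eq] at hcard

theorem card_inter_eq_r_of_forall_not_indep_insert_erase (hT : M.Indep T) (hH : M.r H ≤ T.card)
    (h : ∀ a ∈ T \ H, ∀ g ∈ H \ T, ¬ M.Indep (insert g (T.erase a))) :
    (T ∩ H).card = M.r H := by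
  by_contra hne
  have hlt : (T ∩ H).card < M.r H := lt_of_le_of_ne (hT.card_inter_le_r H) hne
  obtain ⟨J, hJ⟩ := M.exists_isBasis H
  obtain ⟨g, hg, hTg⟩ := M.exchange (M.subset_indep hT inter_subset_left) hJ.indep
    (by rwa [hJ.card_eq])
  rw [mem_sdiff, mem_inter, not_and'] at hg
  have hgH := hJ.subset hg.1
  obtain ⟨a, ha, hTa⟩ := hT.exists_indep_insert_erase inter_subset_left (hlt.trans_le hH)
    (hg.2 hgH) hTg
  exact h a (by rwa [sdiff_inter_self_left] at ha) g (mem_sdiff.2 ⟨hgH, hg.2 hgH⟩) hTa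

/-- The independent sets whose cardinality lies in `C`: the vertices of the cardinality constrained
matroid polytope for `C`. -/
def indepSets (M : FinMatroid α) (C : Set ℕ) : Set (Finset α) := {I | M.Indep I ∧ I.card ∈ C}

/-- The independent sets of cardinality `k` satisfying the rank inequality `x(F) ≤ r(F)` with
equality. Equivalently, they contain a basis of `F`, and so they correspond to the bases of the
truncation to rank `k - r(F)` of the contraction of `M` by `F`. -/
def tightSets (M : FinMatroid α) (F : Finset α) (k : ℕ) : Set (Finset α) :=
  {T ∈ M.indepSets {k} | (T ∩ F).card = M.r F}

theorem cardPolytope_eq (M : FinMatroid α) {m : ℕ} (c : Fin m → ℕ) :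
    cardPolytope M c = convexHull ℝ (incVec '' M.indepSets (Set.range c)) := by
  refine congrArg (convexHull ℝ) (Set.ext fun x => ?_)
  simp only [indepSets, Set.mem_image, Set.mem_ofPred_eq, Set.mem_range, and_assoc, eq_comm]

theorem exactPolytope_eq (M : FinMatroid α) (k : ℕ) :
    exactPolytope M k = convexHull ℝ (incVec '' M.indepSets {k}) := by
  refine congrArg (convexHull ℝ) (Set.ext fun x => ?_)
  simp only [indepSets, Set.mem_image, Set.mem_ofPred_eq, Set.mem_singleton_iff, and_assoc,
    eq_comm (a := x)]

theorem isBasis_inter_of_mem_tightSets (hT : T ∈ M.tightSets F k) : M.IsBasis (T ∩ F) F :=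
  ⟨M.subset_indep hT.1.1 inter_subset_left, inter_subset_right, hT.2⟩

theorem IsBasis.mem_tightSets (hX : M.IsBasis X F) (hXT : X ⊆ T) (hT : M.Indep T)
    (hk : T.card = k) : T ∈ M.tightSets F k :=
  ⟨⟨hT, hk⟩, (hT.card_inter_le_r F).antisymm
    (hX.card_eq ▸ card_le_card (subset_inter hXT hX.subset))⟩

theorem exists_mem_tightSets_inter_tightSets (hFH : F ⊆ H) (hHk : M.r H ≤ k)
    (hk : k ≤ M.r univ) : ∃ T, T ∈ M.tightSets F k ∧ T ∈ M.tightSets H k := by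
  obtain ⟨X, hX⟩ := M.exists_isBasis F
  obtain ⟨Y, hXY, hYH, hY, hcard⟩ := hX.indep.exists_superset_card_eq (hX.subset.trans hFH)
    (hX.card_eq.trans_le (M.r_mono hFH)) le_rfl
  obtain ⟨T, hYT, -, hT, hTk⟩ := hY.exists_superset_card_eq (subset_univ Y) (hcard.trans_le hHk) hk
  exact ⟨T, hX.mem_tightSets (hXY.trans hYT) hT hTk,
    IsBasis.mem_tightSets ⟨hY, hYH, hcard⟩ hYT hT hTk⟩

theorem exists_mem_tightSets (hFk : M.r F ≤ k) (hk : k ≤ M.r univ) :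
    ∃ T, T ∈ M.tightSets F k :=
  (exists_mem_tightSets_inter_tightSets Subset.rfl hFk hk).imp fun _ => And.left

theorem r_lt_r_insert_of_mem_tightSets (hT : T ∈ M.tightSets F k) (heT : e ∈ T) (heF : e ∉ F) :
    M.r F < M.r (insert e F) :=
  (isBasis_inter_of_mem_tightSets hT).r_lt_r_insert (fun h => heF (mem_inter.1 h).2)
    (M.subset_indep hT.1.1 (insert_subset heT inter_subset_left))

theorem insert_erase_mem_tightSets {a : α} (hT : T ∈ M.tightSets F k) (haT : a ∈ T) (haF : a ∉ F)
    (hgT : g ∉ T) (h : M.Indep (insert g (T.erase a))) :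
    insert g (T.erase a) ∈ M.tightSets F k := by
  refine (isBasis_inter_of_mem_tightSets hT).mem_tightSets (by grind) h ?_
  rw [card_insert_of_notMem (fun hg => hgT (mem_of_mem_erase hg)), card_erase_add_one haT]
  exact hT.1.2

theorem weight_eq_of_lt_r {R : Type*} [AddCommGroup R] {b : α → R} {d : R} {f : α} (hFk : M.r F < k)
    (hk : k < M.r G) (hFG : F ⊆ G) (hcl : ∀ x ∈ G \ F, M.r F < M.r (insert x F))
    (hb : ∀ T ∈ M.tightSets F k, T ⊆ G → ∑ x ∈ T, b x = d) (he : e ∈ G \ F) (hf : f ∈ G \ F) :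
    b f = b e := by
  obtain ⟨X, hX⟩ := M.exists_isBasis F
  obtain ⟨heG, heF⟩ := mem_sdiff.1 he
  obtain ⟨hfG, hfF⟩ := mem_sdiff.1 hf
  have hXe := hX.indep_insert (hcl e he)
  have hXeG : insert e X ⊆ G := insert_subset heG (hX.subset.trans hFG)
  have hXecard : (insert e X).card = M.r F + 1 := by
    rw [card_insert_of_notMem (fun h => heF (hX.subset h)), hX.card_eq]
  rcases eq_or_ne f e with rfl | hfe
  · rfl
  by_cases hXef : M.Indep (insert f (insert e X))
  · obtain ⟨T, hXT, hTG, hT, hTcard⟩ := hXef.exists_superset_card_eq (insert_subset hfG hXeG)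
      (by grw [card_insert_le, hXecard]; lia) (Nat.add_one_le_of_lt hk)
    have herase : ∀ x ∈ T, x ∉ F → b x + d = ∑ y ∈ T, b y := fun x hxT hxF => by
      have htight : T.erase x ∈ M.tightSets F k := hX.mem_tightSets
        (by grind [hX.subset]) (M.subset_indep hT (erase_subset x T))
        (by rw [card_erase_of_mem hxT, hTcard, Nat.add_sub_cancel])
      rw [← add_sum_erase T b hxT, hb _ htight ((erase_subset x T).trans hTG)]
    exact add_right_cancel ((herase f (by grind) hfF).trans (herase e (by grind) heF).symm)
  · obtain ⟨T, hXT, hTG, hT, hTcard⟩ := hXe.exists_superset_card_eq hXeG (by lia) hk.le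
    have hfT : f ∉ T := fun h => hXef (M.subset_indep hT (insert_subset h hXT))
    have hXT' : X ⊆ T := (subset_insert e X).trans hXT
    have htight := hX.mem_tightSets hXT' hT hTcard
    obtain ⟨a, ha, hTa⟩ := hT.exists_indep_insert_erase hXT' (by rw [hX.card_eq, hTcard]; exact hFk)
      hfT (hX.indep_insert (hcl f hf))
    obtain rfl : a = e := by
      by_contra hne
      exact hXef (M.subset_indep hTa (by grind))
    refine weight_eq_of_sum_exchange_eq (mem_sdiff.1 ha).1 hfT ?_
    rw [hb T htight hTG, hb _ (insert_erase_mem_tightSets htight (mem_sdiff.1 ha).1 heF hfT hTa)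
      (insert_subset hfG ((erase_subset a T).trans hTG))]

theorem kSeparable_compl_iff : M.kSeparable k Fᶜ ↔
    ∃ A B : Finset α, A.Nonempty ∧ B.Nonempty ∧ Disjoint A B ∧ A ∪ B = Fᶜ ∧
      M.r (F ∪ A) + M.r (F ∪ B) = k + M.r F := by
  simp only [kSeparable, ← nonempty_iff_ne_empty]
  refine exists_congr fun A => exists_congr fun B => and_congr_right fun _ =>
    and_congr_right fun _ => and_congr_right fun hd => and_congr_right fun hAB => ?_
  rw [krank, krank, krank, compl_eq_union_of_union_eq_compl hd hAB,
    compl_eq_union_of_union_eq_compl hd.symm ((union_comm B A).trans hAB), compl_compl]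
  lia

theorem kSeparable_compl_of_weight_ne {R : Type*} [AddCommGroup R] {b : α → R} {d : R} {f : α}
    (hb : ∀ T ∈ M.tightSets F (M.r univ), ∑ x ∈ T, b x = d) (he : e ∉ F) (hf : f ∉ F)
    (hne : b f ≠ b e) : M.kSeparable (M.r univ) Fᶜ := by
  classical
  set A := {x ∈ Fᶜ | b x = b e} with hA
  set B := {x ∈ Fᶜ | b x ≠ b e} with hB
  have hd : Disjoint A B := disjoint_filter_filter_not _ _ _
  have hAB : A ∪ B = Fᶜ := filter_union_filter_not_eq _ _
  obtain ⟨T, hTF, hTA⟩ := exists_mem_tightSets_inter_tightSets (subset_union_left : F ⊆ F ∪ A)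
    (M.r_mono (subset_univ _)) le_rfl
  -- Exchanges within tight sets preserve the weight, so none replaces an element of `A` by one
  -- of `B`.
  have hTB : (T ∩ (F ∪ B)).card = M.r (F ∪ B) := by
    refine card_inter_eq_r_of_forall_not_indep_insert_erase hTF.1.1
      ((M.r_mono (subset_univ _)).trans_eq hTF.1.2.symm) fun a ha g hg hind => ?_
    obtain ⟨haT, haFB⟩ := mem_sdiff.1 ha
    obtain ⟨hgFB, hgT⟩ := mem_sdiff.1 hg
    have haF : a ∉ F := fun h => haFB (mem_union_left B h)
    have hae : b a = b e := by_contra fun h => haFB (mem_union_right F (by simp [hB, haF, h]))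
    by_cases hgF : g ∈ F
    · have hlt := (isBasis_inter_of_mem_tightSets hTF).r_lt_r_insert (e := g) (by grind)
        (M.subset_indep hind (by grind))
      rw [insert_eq_of_mem hgF] at hlt
      exact lt_irrefl _ hlt
    · have hge : b g ≠ b e := (mem_filter.1 ((mem_union.1 hgFB).resolve_left hgF)).2
      refine hge ((weight_eq_of_sum_exchange_eq haT hgT ?_).trans hae)
      rw [hb T hTF, hb _ (insert_erase_mem_tightSets hTF haT haF hgT hind)]
  refine kSeparable_compl_iff.2 ⟨A, B, ⟨e, by simp [hA, he]⟩, ⟨f, by simp [hB, hf, hne]⟩, hd,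
    hAB, ?_⟩
  rw [← hTA.2, ← hTB, card_inter_union_add_card_inter_union hd hAB, hTF.2, hTF.1.2]

theorem exists_weight_ne_zero_of_kSeparable_compl (hFk : M.r F < k) (h : M.kSeparable k Fᶜ) :
    ∃ b : α → ℝ, b ≠ 0 ∧ (∀ x ∈ F, b x = 0) ∧ ∀ T ∈ M.tightSets F k, ∑ x ∈ T, b x = 0 := by
  obtain ⟨A, B, ⟨e, he⟩, ⟨f, hf⟩, hd, hAB, hr⟩ := kSeparable_compl_iff.1 h
  have hAF : Disjoint F A := (subset_compl_iff_disjoint_left.1 (hAB ▸ subset_union_left))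
  have hBF : Disjoint F B := (subset_compl_iff_disjoint_left.1 (hAB ▸ subset_union_right))
  have hcard : ∀ {Y : Finset α}, Disjoint F Y → ∀ T : Finset α,
      (T ∩ (F ∪ Y)).card = (T ∩ F).card + (T ∩ Y).card := fun hY T => by
    rw [inter_union_distrib_left,
      card_union_of_disjoint (hY.mono inter_subset_right inter_subset_right)]
  refine ⟨((M.r (F ∪ B) : ℝ) - M.r F) • incVec A - ((M.r (F ∪ A) : ℝ) - M.r F) • incVec B,
    fun h0 => ?_, fun x hx => ?_, fun T hT => ?_⟩
  · have hBr : (M.r (F ∪ B) : ℝ) - M.r F = 0 := by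
      simpa [incVec, he, disjoint_left.1 hd he] using congrFun h0 e
    have hAr : (M.r (F ∪ A) : ℝ) - M.r F = 0 := by
      simpa [incVec, hf, disjoint_right.1 hd hf, -neg_sub] using congrFun h0 f
    rw [sub_eq_zero, Nat.cast_inj] at hAr hBr
    lia
  · simp [incVec, disjoint_left.1 hAF hx, disjoint_left.1 hBF hx]
  · have hA := hT.1.1.card_inter_le_r (F ∪ A)
    have hB := hT.1.1.card_inter_le_r (F ∪ B)
    have hsum := card_inter_union_add_card_inter_union hd hAB T
    rw [hcard hAF, hcard hBF, hT.2, hT.1.2] at hsum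
    rw [hcard hAF, hT.2] at hA
    rw [hcard hBF, hT.2] at hB
    have hAr : M.r (F ∪ A) = M.r F + (T ∩ A).card := by lia
    have hBr : M.r (F ∪ B) = M.r F + (T ∩ B).card := by lia
    simp only [Pi.sub_apply, Pi.smul_apply, smul_eq_mul, sum_sub_distrib, ← mul_sum, sum_incVec,
      hAr, hBr]
    push_cast
    ring

theorem forall_weight_eq_zero_iff (hFk : M.r F < k) (hk : k ≤ M.r univ) :
    (∀ b : α → ℝ, (∀ x ∈ F, b x = 0) → (∀ T ∈ M.tightSets F k, ∑ x ∈ T, b x = 0) → b = 0) ↔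
      M.ClosedSet F ∧ (M.kInseparable k Fᶜ ∨ k < M.r univ) := by
  constructor
  · intro h
    refine ⟨fun e he => ?_, Or.inl fun hsep => ?_⟩
    · by_contra hle
      have heT : ∀ T ∈ M.tightSets F k, e ∉ T := fun T hT heT =>
        hle (r_lt_r_insert_of_mem_tightSets hT heT he)
      have hzero : incVec {e} = 0 := h _ (fun x hx => if_neg (by grind)) fun T hT => by
        rw [sum_incVec, inter_singleton_of_notMem (heT T hT), card_empty, Nat.cast_zero]
      simpa [incVec] using congrFun hzero e
    · obtain ⟨b, hb0, hbF, hbT⟩ := exists_weight_ne_zero_of_kSeparable_compl hFk hsep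
      exact hb0 (h b hbF hbT)
  · rintro ⟨hcl, hsep⟩ b hbF hbT
    have hconst : ∀ e ∉ F, ∀ f ∉ F, b f = b e := fun e he f hf => by
      rcases hk.lt_or_eq with hlt | rfl
      · exact weight_eq_of_lt_r hFk hlt (subset_univ F)
          (fun x hx => hcl x (mem_sdiff.1 hx).2) (fun T hT _ => hbT T hT) (by simpa) (by simpa)
      · exact by_contra fun hne => hsep.resolve_right (lt_irrefl _)
          (kSeparable_compl_of_weight_ne hbT he hf hne)
    obtain ⟨T, hT⟩ := exists_mem_tightSets hFk.le hk
    have hTF := card_inter_add_card_sdiff T F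
    rw [hT.2, hT.1.2] at hTF
    funext e
    by_cases he : e ∈ F
    · exact hbF e he
    · have hsum := hbT T hT
      rw [← sum_inter_add_sum_sdiff T F b, sum_eq_zero fun x hx => hbF x (mem_inter.1 hx).2,
        zero_add, sum_congr rfl fun x hx => hconst e he x (mem_sdiff.1 hx).2, sum_const,
        smul_eq_zero] at hsum
      exact hsum.resolve_left (by lia)

theorem weight_eq_of_sum_eq_of_lt_r {R : Type*} [AddCommGroup R] {b : α → R} {d : R} {f : α}
    (hk0 : 0 < k) (hk : k < M.r G) (hb : ∀ I ∈ M.indepSets {k}, I ⊆ G → ∑ x ∈ I, b x = d)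
    (he : e ∈ G) (hf : f ∈ G) : b f = b e :=
  weight_eq_of_lt_r (F := ∅) (M.r_empty.trans_lt hk0) hk (empty_subset G)
    (fun x _ => M.r_empty.trans_lt (M.r_singleton_pos x)) (fun T hT => hb T hT.1) (by simpa)
    (by simpa)

theorem polyDim_indepSets_eq_card {C : Set ℕ} {k' : ℕ} (hkC : k ∈ C) (hk0 : 0 < k)
    (hk : k < M.r univ) (hkC' : k' ∈ C) (hk' : k' ≤ M.r univ) (hne : k ≠ k') :
    polyDim (incVec '' M.indepSets C) = Fintype.card α := by
  obtain ⟨I, -, hI, hIk⟩ := M.exists_indep_subset_card_eq hk.le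
  obtain ⟨J, -, hJ, hJk⟩ := M.exists_indep_subset_card_eq hk'
  have hIC : I ∈ M.indepSets C := ⟨hI, hIk ▸ hkC⟩
  have hJC : J ∈ M.indepSets C := ⟨hJ, hJk ▸ hkC'⟩
  refine polyDim_incVec_image_eq_card ⟨I, hIC⟩ fun b d hb => funext fun e => ?_
  have hconst : ∀ x, b x = b e := fun x => weight_eq_of_sum_eq_of_lt_r hk0 hk
    (fun K hK _ => hb K ⟨hK.1, hK.2 ▸ hkC⟩) (mem_univ e) (mem_univ x)
  have hsum := (hb I hIC).trans (hb J hJC).symm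
  simp only [hconst, sum_const, hIk, hJk, nsmul_eq_mul] at hsum
  exact (mul_eq_mul_right_iff.1 hsum).resolve_left (by exact_mod_cast hne)

section ForbiddenSet

variable {l : ℕ} {C : Set ℕ}

/-- The coefficients of the rank induced forbidden set inequality for `F` between the consecutive
cardinalities `l < r(F) < k`. -/
noncomputable def forbiddenWeight (M : FinMatroid α) (F : Finset α) (l k : ℕ) : α → ℝ :=
  fun e => if e ∈ F then (k : ℝ) - M.r F else -((M.r F : ℝ) - l)

/-- The vertices `I` of cardinality `l` or `k` of the face defined by the rank induced forbidden set
inequality: for `|I| = l` equality means `I ⊆ F`, for `|I| = k` it means `|I ∩ F| = r(F)`. -/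
def forbiddenFace (M : FinMatroid α) (F : Finset α) (l k : ℕ) : Set (Finset α) :=
  {I ∈ M.indepSets {l} | I ⊆ F} ∪ M.tightSets F k

theorem sum_forbiddenWeight (M : FinMatroid α) (F I : Finset α) (l k : ℕ) :
    ∑ e ∈ I, M.forbiddenWeight F l k e =
      (I ∩ F).card * ((k : ℝ) - M.r F) - (I \ F).card * ((M.r F : ℝ) - l) := by
  simp only [forbiddenWeight, sum_ite, filter_mem_eq_inter, filter_notMem_eq_sdiff, sum_const,
    nsmul_eq_mul]
  ring

theorem sum_forbiddenWeight_eq_sub_of_card_sub (M : FinMatroid α) (F I : Finset α) (l k : ℕ) :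
    ∑ e ∈ I, M.forbiddenWeight F l k e = l * ((k : ℝ) - M.r F) -
      (((l : ℝ) - I.card) * ((k : ℝ) - M.r F) + (I \ F).card * ((k : ℝ) - l)) := by
  rw [sum_forbiddenWeight, ← card_inter_add_card_sdiff I F]
  push_cast
  ring

theorem sum_forbiddenWeight_eq_sub_of_sub_card (M : FinMatroid α) (F I : Finset α) (l k : ℕ) :
    ∑ e ∈ I, M.forbiddenWeight F l k e = l * ((k : ℝ) - M.r F) -
      (((I.card : ℝ) - k) * ((M.r F : ℝ) - l) +
        ((M.r F : ℝ) - (I ∩ F).card) * ((k : ℝ) - l)) := by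
  rw [sum_forbiddenWeight, ← card_inter_add_card_sdiff I F]
  push_cast
  ring

theorem sum_forbiddenWeight_le_and_eq_iff (hl : l < M.r F) (hFk : M.r F < k) (hI : M.Indep I)
    (hcard : I.card ≤ l ∨ k ≤ I.card) :
    ∑ e ∈ I, M.forbiddenWeight F l k e ≤ l * ((k : ℝ) - M.r F) ∧
      (∑ e ∈ I, M.forbiddenWeight F l k e = l * ((k : ℝ) - M.r F) ↔
        I.card = l ∧ I ⊆ F ∨ I.card = k ∧ (I ∩ F).card = M.r F) := by
  have hlF : (0 : ℝ) < M.r F - l := sub_pos.2 (by exact_mod_cast hl)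
  have hkF : (0 : ℝ) < k - M.r F := sub_pos.2 (by exact_mod_cast hFk)
  have hlk : (0 : ℝ) < k - l := sub_pos.2 (by exact_mod_cast hl.trans hFk)
  rcases hcard with hIl | hIk
  · have hIl' : (0 : ℝ) ≤ l - I.card := sub_nonneg.2 (by exact_mod_cast hIl)
    rw [sum_forbiddenWeight_eq_sub_of_card_sub, sub_eq_self, add_eq_zero_iff_of_nonneg
      (by positivity) (by positivity), mul_eq_zero_iff_right hkF.ne', mul_eq_zero_iff_right hlk.ne',
      sub_eq_zero, Nat.cast_inj, Nat.cast_eq_zero, card_eq_zero, sdiff_eq_empty_iff_subset]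
    exact ⟨sub_le_self _ (by positivity), by grind⟩
  · have hIk' : (0 : ℝ) ≤ I.card - k := sub_nonneg.2 (by exact_mod_cast hIk)
    have hIF : (0 : ℝ) ≤ M.r F - (I ∩ F).card :=
      sub_nonneg.2 (by exact_mod_cast hI.card_inter_le_r F)
    rw [sum_forbiddenWeight_eq_sub_of_sub_card, sub_eq_self, add_eq_zero_iff_of_nonneg
      (by positivity) (by positivity), mul_eq_zero_iff_right hlF.ne', mul_eq_zero_iff_right hlk.ne',
      sub_eq_zero, sub_eq_zero, Nat.cast_inj, Nat.cast_inj]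
    exact ⟨sub_le_self _ (by positivity), by grind⟩

theorem sum_forbiddenWeight_of_mem_forbiddenFace (hI : I ∈ M.forbiddenFace F l k) :
    ∑ e ∈ I, M.forbiddenWeight F l k e = l * ((k : ℝ) - M.r F) := by
  rcases hI with ⟨⟨-, rfl⟩, hIF⟩ | ⟨⟨-, rfl⟩, hIF⟩
  · rw [sum_forbiddenWeight_eq_sub_of_card_sub, sdiff_eq_empty_iff_subset.2 hIF, sub_self, zero_mul,
      card_empty, Nat.cast_zero, zero_mul, add_zero, sub_zero]
  · rw [sum_forbiddenWeight_eq_sub_of_sub_card, hIF, sub_self, zero_mul, sub_self, zero_mul,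
      add_zero, sub_zero]

theorem forall_exists_smul_forbiddenWeight_eq_iff (hl : l < M.r F) (hFk : M.r F < k)
    (hl0 : 0 < l) :
    (∀ (b : α → ℝ) (d : ℝ), (∀ I ∈ M.forbiddenFace F l k, ∑ e ∈ I, b e = d) →
        ∃ t : ℝ, t • M.forbiddenWeight F l k = b) ↔
      ∀ b : α → ℝ, (∀ e ∈ F, b e = 0) → (∀ T ∈ M.tightSets F k, ∑ e ∈ T, b e = 0) → b = 0 := by
  obtain ⟨e₀, he₀⟩ := nonempty_of_r_pos (hl0.trans hl)
  have hkF : (k : ℝ) - M.r F ≠ 0 := sub_ne_zero.2 (by exact_mod_cast hFk.ne')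
  have hw : ∀ e ∈ F, M.forbiddenWeight F l k e = (k : ℝ) - M.r F := fun e he => if_pos he
  constructor
  · intro h b hbF hbT
    obtain ⟨t, rfl⟩ := h b 0 fun I hI => hI.elim
      (fun hI => sum_eq_zero fun e he => hbF e (hI.2 he)) (hbT I)
    have ht : t = 0 := by simpa [hw e₀ he₀, hkF] using hbF e₀ he₀
    rw [ht, zero_smul]
  · intro h b d hb
    obtain ⟨J, hJF, hJ, hJl⟩ := M.exists_indep_subset_card_eq hl.le
    have hconst : ∀ e ∈ F, b e = b e₀ := fun e he => weight_eq_of_sum_eq_of_lt_r hl0 hl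
      (fun I hI hIF => hb I (Or.inl ⟨hI, hIF⟩)) he₀ he
    have hd : d = l * b e₀ := by
      rw [← hb J (Or.inl ⟨⟨hJ, hJl⟩, hJF⟩), sum_congr rfl fun e he => hconst e (hJF he), sum_const,
        hJl, nsmul_eq_mul]
    refine ⟨b e₀ / (k - M.r F), (sub_eq_zero.1 (h _ (fun e he => ?_) fun T hT => ?_)).symm⟩
    · rw [Pi.sub_apply, Pi.smul_apply, smul_eq_mul, hw e he, hconst e he, div_mul_cancel₀ _ hkF,
        sub_self]
    · have hT' : T ∈ M.forbiddenFace F l k := Or.inr hT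
      simp only [Pi.sub_apply, Pi.smul_apply, smul_eq_mul, sum_sub_distrib, ← mul_sum,
        sum_forbiddenWeight_of_mem_forbiddenFace hT', hb T hT', hd]
      field_simp
      ring

theorem isFacet_convexHull_indepSets_forbiddenWeight_iff (hl : l < M.r F) (hFk : M.r F < k)
    (hlC : l ∈ C) (hkC : k ∈ C) (hC : ∀ n ∈ C, n ≤ l ∨ k ≤ n) :
    IsFacet (convexHull ℝ (incVec '' M.indepSets C)) (M.forbiddenWeight F l k)
        (l * ((k : ℝ) - M.r F)) ↔
      polyDim (incVec '' M.forbiddenFace F l k) + 1 = polyDim (incVec '' M.indepSets C) := by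
  have hface : {I ∈ M.indepSets C | ∑ e ∈ I, M.forbiddenWeight F l k e = l * ((k : ℝ) - M.r F)} =
      M.forbiddenFace F l k := by
    ext I
    constructor
    · rintro ⟨⟨hI, hIC⟩, hsum⟩
      exact ((sum_forbiddenWeight_le_and_eq_iff hl hFk hI (hC _ hIC)).2.1 hsum).imp
        (fun h => ⟨⟨hI, h.1⟩, h.2⟩) fun h => ⟨⟨hI, h.1⟩, h.2⟩
    · intro hI
      refine ⟨?_, sum_forbiddenWeight_of_mem_forbiddenFace hI⟩
      rcases hI with ⟨⟨hI, rfl⟩, -⟩ | ⟨⟨hI, rfl⟩, -⟩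
      · exact ⟨hI, hlC⟩
      · exact ⟨hI, hkC⟩
  rw [isFacet_convexHull_incVec_iff fun I hI =>
    (sum_forbiddenWeight_le_and_eq_iff hl hFk hI.1 (hC _ hI.2)).1, hface]

theorem isFacet_forbiddenWeight_iff_of_pos (hl0 : 0 < l) (hl : l < M.r F) (hFk : M.r F < k)
    (hk : k ≤ M.r univ) (hlC : l ∈ C) (hkC : k ∈ C) (hC : ∀ n ∈ C, n ≤ l ∨ k ≤ n) :
    IsFacet (convexHull ℝ (incVec '' M.indepSets C)) (M.forbiddenWeight F l k)
        (l * ((k : ℝ) - M.r F)) ↔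
      M.ClosedSet F ∧ (M.kInseparable k Fᶜ ∨ k < M.r univ) := by
  obtain ⟨T, hT⟩ := exists_mem_tightSets hFk.le hk
  have hw : M.forbiddenWeight F l k ≠ 0 := fun h => by
    obtain ⟨e, he⟩ := nonempty_of_r_pos (hl0.trans hl)
    have hwe := congrFun h e
    rw [forbiddenWeight, if_pos he, Pi.zero_apply, sub_eq_zero, Nat.cast_inj] at hwe
    exact hFk.ne' hwe
  rw [isFacet_convexHull_indepSets_forbiddenWeight_iff hl hFk hlC hkC hC,
    polyDim_indepSets_eq_card hlC hl0 (by lia) hkC hk (by lia),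
    polyDim_incVec_image_add_one_eq_card_iff ⟨T, Or.inr hT⟩ hw
      fun I => sum_forbiddenWeight_of_mem_forbiddenFace,
    forall_exists_smul_forbiddenWeight_eq_iff hl hFk hl0, forall_weight_eq_zero_iff hFk hk]

end ForbiddenSet

theorem isFacet_exactPolytope_iff :
    IsFacet (exactPolytope M k) (incVec F) (M.r F) ↔
      polyDim (incVec '' M.tightSets F k) + 1 = polyDim (incVec '' M.indepSets {k}) := by
  rw [exactPolytope_eq, isFacet_convexHull_incVec_iff]
  · simp only [sum_incVec, Nat.cast_inj, tightSets]
  · intro I hI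
    rw [sum_incVec]
    exact_mod_cast hI.1.card_inter_le_r F

theorem indepSets_insert_zero {C : Set ℕ} :
    M.indepSets (insert 0 C) = insert ∅ (M.indepSets C) := by
  ext I
  simp only [indepSets, Set.mem_ofPred_eq, Set.mem_insert_iff, card_eq_zero, and_or_left]
  exact or_congr_left (and_iff_right_of_imp fun h => h ▸ M.empty_indep)

theorem polyDim_indepSets_eq_polyDim_add_one {C : Set ℕ} (h0C : 0 ∈ C) (hkC : k ∈ C) (hk0 : 0 < k)
    (hk : k ≤ M.r univ) (hC : ∀ n ∈ C, n ≤ 0 ∨ k ≤ n) :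
    polyDim (incVec '' M.indepSets C) = polyDim (incVec '' M.indepSets {k}) + 1 := by
  obtain ⟨I, -, hI, hIk⟩ := M.exists_indep_subset_card_eq hk
  have hne : (M.indepSets {k}).Nonempty := ⟨I, hI, hIk⟩
  rw [← polyDim_incVec_image_insert_empty hne hk0.ne' fun J hJ => hJ.2, ← indepSets_insert_zero]
  rcases hk.lt_or_eq with hlt | rfl
  · rw [polyDim_indepSets_eq_card hkC hk0 hlt h0C (Nat.zero_le _) hk0.ne',
      polyDim_indepSets_eq_card (by simp) hk0 hlt (by simp) (Nat.zero_le _) hk0.ne']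
  · congr 2
    ext J
    refine and_congr_right fun hJ => ⟨fun hJC => ?_, ?_⟩
    · exact (hC _ hJC).imp Nat.le_zero.1 (hJ.card_le_r (subset_univ J)).antisymm
    · rintro (h | h)
      · exact h ▸ h0C
      · exact h ▸ hkC

theorem isFacet_forbiddenWeight_zero_iff {C : Set ℕ} (hF : 0 < M.r F) (hFk : M.r F < k)
    (hk : k ≤ M.r univ) (h0C : 0 ∈ C) (hkC : k ∈ C) (hC : ∀ n ∈ C, n ≤ 0 ∨ k ≤ n) :
    IsFacet (convexHull ℝ (incVec '' M.indepSets C)) (M.forbiddenWeight F 0 k)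
        ((0 : ℕ) * ((k : ℝ) - M.r F)) ↔
      IsFacet (exactPolytope M k) (incVec F) (M.r F) := by
  have hface : M.forbiddenFace F 0 k = insert ∅ (M.tightSets F k) := by
    refine congrArg (· ∪ M.tightSets F k) (Set.eq_singleton_iff_unique_mem.2 ?_)
    exact ⟨⟨⟨M.empty_indep, card_empty⟩, empty_subset F⟩, fun I hI => card_eq_zero.1 hI.1.2⟩
  have hk0 : 0 < k := by lia
  rw [isFacet_convexHull_indepSets_forbiddenWeight_iff hF hFk h0C hkC hC, hface,
    polyDim_incVec_image_insert_empty (exists_mem_tightSets hFk.le hk) hk0.ne' fun T hT => hT.1.2,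
    polyDim_indepSets_eq_polyDim_add_one h0C hkC hk0 hk hC, Nat.add_right_cancel_iff,
    isFacet_exactPolytope_iff]

end FinMatroid

/-- facets of P^c(E) induced by rank induced forbidden set
inequalities. -/
theorem forbidden_set_facet_iff {α : Type*} [Fintype α] [DecidableEq α]
    (M : FinMatroid α)
    {m : ℕ} (c : Fin m → ℕ) (hm : 2 ≤ m) (hmono : StrictMono c)
    (hlast : c ⟨m - 1, by omega⟩ ≤ M.r Finset.univ)
    (F : Finset α) (p : Fin m) (hp : p.val + 1 < m)
    (h1 : c p < M.r F) (h2 : M.r F < c ⟨p.val + 1, hp⟩) :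
    IsFacet (cardPolytope M c)
      (fun e => if e ∈ F then ((c ⟨p.val + 1, hp⟩ : ℝ) - M.r F) else -((M.r F : ℝ) - c p))
      ((c p : ℝ) * ((c ⟨p.val + 1, hp⟩ : ℝ) - M.r F)) ↔
      ((c p = 0 ∧ c ⟨0, by omega⟩ = 0 ∧
          IsFacet (exactPolytope M (c ⟨p.val + 1, hp⟩)) (incVec F) (M.r F)) ∨
       (0 < c p ∧ M.ClosedSet F ∧
          (M.kInseparable (c ⟨p.val + 1, hp⟩) Fᶜ ∨ c ⟨p.val + 1, hp⟩ < M.r Finset.univ))) := by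
  have hC : ∀ n ∈ Set.range c, n ≤ c p ∨ c ⟨p.val + 1, hp⟩ ≤ n := Set.forall_mem_range.2 fun q =>
    (le_or_gt q p).imp hmono.monotone.imp fun h => hmono.monotone (Fin.le_def.2 h)
  have hk : c ⟨p.val + 1, hp⟩ ≤ M.r univ :=
    (hmono.monotone (Fin.le_def.2 (Nat.le_sub_one_of_lt hp))).trans hlast
  have hlC : c p ∈ Set.range c := ⟨p, rfl⟩
  have hkC : c ⟨p.val + 1, hp⟩ ∈ Set.range c := ⟨_, rfl⟩
  rw [FinMatroid.cardPolytope_eq]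
  change IsFacet _ (M.forbiddenWeight F (c p) (c ⟨p.val + 1, hp⟩)) _ ↔ _
  rcases Nat.eq_zero_or_pos (c p) with h0 | hpos
  · have hc0 : c ⟨0, by omega⟩ ≤ c p := hmono.monotone (Fin.le_def.2 (Nat.zero_le p.val))
    rw [h0] at h1 hC hlC hc0 ⊢
    rw [FinMatroid.isFacet_forbiddenWeight_zero_iff h1 h2 hk hlC hkC hC]
    simp only [Nat.le_zero.1 hc0, true_and, lt_irrefl, false_and, or_false]
  · rw [FinMatroid.isFacet_forbiddenWeight_iff_of_pos hpos h1 h2 hk hlC hkC hC]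
    simp only [hpos, hpos.ne', true_and, false_and, false_or]
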